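/- arXiv:2011.10018 — 2 statements merged into one kernel-verified Lean document; each statement's English description precedes it below -/
import Mathlib

section
/- Let K be a field of characteristic p > 0 and L a finite Galois field extension of K. Then the image in the quotient group K/℘(K) of the additive subgroup {a ∈ K : a = b^p − b for some b ∈ L} is finite, where ℘(K) = {x^p − x : x ∈ K} is the image of the Artin–Schreier map. -/
/-- Fact 5.1(2) (Poizat's lemma): if `K` has characteristic `p > 0` and `L` is a
finite Galois extension of `K`, then the image in `K/℘(K)` of the set of `a ∈ K`
of the form `b^p − b` with `b ∈ L` is finite, where `℘(x) = x^p − x` is the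
Artin–Schreier map. -/
theorem stmt_7 {K L : Type*} [Field K] [Field L] [Algebra K L]
    [FiniteDimensional K L] [IsGalois K L]
    (p : ℕ) [Fact p.Prime] [CharP K p] :
    Set.Finite
      ((QuotientAddGroup.mk :
          K → K ⧸ ((frobenius K p).toAddMonoidHom - AddMonoidHom.id K).range) ''
        {a : K | ∃ b : L, algebraMap K L a = b ^ p - b}) := by
  classical
  have hp : p.Prime := Fact.out
  haveI : CharP L p := charP_of_injective_algebraMap (algebraMap K L).injective p
  have hT : Finite {x : L // x ^ p = x} := by
    have h0 := FiniteField.X_pow_card_sub_X_ne_zero L hp.one_lt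
    refine Set.Finite.subset
      (Polynomial.X ^ p - Polynomial.X : Polynomial L).roots.toFinset.finite_toSet ?_
    intro x hx
    have hx' : x ^ p = x := hx
    simp [h0, hx']
  rw [← Set.finite_coe_iff]
  have key : ∀ q : ↥((QuotientAddGroup.mk :
          K → K ⧸ ((frobenius K p).toAddMonoidHom - AddMonoidHom.id K).range) ''
        {a : K | ∃ b : L, algebraMap K L a = b ^ p - b}),
      ∃ a : K, ∃ b : L, QuotientAddGroup.mk a = q.1 ∧ algebraMap K L a = b ^ p - b := by
    rintro ⟨q, a, ⟨b, hb⟩, rfl⟩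
    exact ⟨a, b, rfl, hb⟩
  choose a b ha hb using key
  have hfix : ∀ q, ∀ σ : L ≃ₐ[K] L, (σ (b q) - b q) ^ p = σ (b q) - b q := by
    intro q σ
    have h := congrArg σ (hb q)
    rw [AlgEquiv.commutes, map_sub, map_pow] at h
    rw [sub_pow_char]
    linear_combination hb q - h
  refine Finite.of_injective (β := (L ≃ₐ[K] L) → {x : L // x ^ p = x})
    (fun q σ => ⟨σ (b q) - b q, hfix q σ⟩) ?_
  intro q r h
  have hσ : ∀ σ : L ≃ₐ[K] L, σ (b r - b q) = b r - b q := by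
    intro σ
    have := congrArg Subtype.val (congrFun h σ)
    simp only at this
    rw [map_sub]
    linear_combination -this
  obtain ⟨c, hc⟩ := (IsGalois.mem_range_algebraMap_iff_fixed (F := K) (b r - b q)).2 hσ
  apply Subtype.ext
  rw [← ha q, ← ha r, QuotientAddGroup.eq]
  refine ⟨c, ?_⟩
  apply (algebraMap K L).injective
  have : (algebraMap K L) c ^ p - algebraMap K L c = -(algebraMap K L (a q)) + algebraMap K L (a r) := by
    rw [hc, sub_pow_char, hb, hb]; ring
  simpa [frobenius_def] using this
end

section
/- Let K be a field. Suppose that for every finite Galois field extension L of K the following hold: (i) for every prime q with q ≠ char K, every element of Lˣ is a q-th power in L; and (ii) if char K = p > 0, then every element of L is of the form b^p − b for some b ∈ L. Then K is separably closed. -/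
open Polynomial Module IntermediateField

lemma kummer_step {F M : Type*} [Field F] [Field M] [Algebra F M] [FiniteDimensional F M]
    [IsGalois F M] (q : ℕ) (hq : q.Prime) (hdeg : finrank F M = q)
    (ζ : F) (hζ : IsPrimitiveRoot ζ q) (e : F) (he : e ^ q = -1)
    (h : ∀ x : M, x ≠ 0 → ∃ y : M, y ^ q = x) : False := by
  have : Fact q.Prime := ⟨hq⟩
  have hc : IsCyclic Gal(M/F) := isCyclic_of_prime_card (p := q)
    (by rw [IsGalois.card_aut_eq_finrank, hdeg])
  obtain ⟨b, ⟨a, ha⟩, hb⟩ := exists_root_adjoin_eq_top_of_isCyclic F M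
    ⟨ζ, by rw [mem_primitiveRoots finrank_pos, hdeg]; exact hζ⟩
  have hirr := irreducible_X_pow_sub_C_of_root_adjoin_eq_top ha.symm hb
  rw [hdeg] at ha hirr
  have hne := pow_ne_of_irreducible_X_pow_sub_C hirr dvd_rfl hq.ne_one
  have hb0 : b ≠ 0 := by
    rintro rfl
    rw [zero_pow hq.ne_zero] at ha
    have : a = 0 := by simpa using ha
    exact hne 0 (by rw [this, zero_pow hq.ne_zero])
  obtain ⟨c, hc⟩ := h b hb0
  have hmin : minpoly F b = X ^ q - C a := by
    symm
    apply minpoly.eq_of_irreducible_of_monic hirr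
    · simp [ha]
    · exact monic_X_pow_sub_C _ hq.ne_zero
  have hint : IsIntegral F b := IsIntegral.of_finite F b
  let pb := PowerBasis.ofAdjoinEqTop' hint (by
    rw [← IntermediateField.adjoin_simple_toSubalgebra_of_isAlgebraic hint.isAlgebraic, hb]; rfl)
  have hpb : pb.gen = b := PowerBasis.ofAdjoinEqTop'_gen _ _
  have hn := Algebra.PowerBasis.norm_gen_eq_coeff_zero_minpoly pb
  rw [hpb, hmin, ← pb.finrank, hdeg, ← hc, map_pow] at hn
  have hq0 : q ≠ 0 := hq.ne_zero
  simp [coeff_X_pow, hq0.symm] at hn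
  apply hne (e ^ (q + 1) * Algebra.norm F c)
  rw [mul_pow, hn, ← pow_mul, mul_comm (q+1), pow_mul, he, pow_succ]
  have : ((-1 : F) ^ q) * (-1) ^ q = 1 := by rw [← mul_pow]; simp
  linear_combination a * this

lemma as_step {F M : Type*} [Field F] [Field M] [Algebra F M] [FiniteDimensional F M]
    [IsGalois F M] (p : ℕ) (hp : p.Prime) [CharP F p] (hdeg : finrank F M = p)
    (h : ∀ x : M, ∃ y : M, y ^ p - y = x) : False := by
  have : Fact p.Prime := ⟨hp⟩
  have : CharP M p := charP_of_injective_algebraMap (algebraMap F M).injective p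
  have hcard : Nat.card Gal(M/F) = p := by rw [IsGalois.card_aut_eq_finrank, hdeg]
  have hc : IsCyclic Gal(M/F) := isCyclic_of_prime_card (p := p) hcard
  obtain ⟨σ, hσ⟩ := hc
  -- fixed elements
  have hfix : ∀ x : M, σ x = x → ∃ y : F, algebraMap F M y = x := by
    intro x hx
    have := (IsGalois.mem_range_algebraMap_iff_fixed (F := F) x).2 (by
      intro g
      have : Subgroup.zpowers σ ≤ MulAction.stabilizer Gal(M/F) x := by
        rw [Subgroup.zpowers_le]; exact hx
      exact this (hσ g))
    exact this
  -- Artin–Schreier generator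
  obtain ⟨b, hb⟩ : ∃ b : M, σ b = b + 1 := by
    let T : Module.End F M := σ.toLinearMap - 1
    have hT : ∀ x, T x = σ x - x := fun x => rfl
    have hTp : T ^ p = 0 := by
      have : CharP (Module.End F M) p :=
        charP_of_injective_algebraMap (algebraMap F (Module.End F M)).injective p
      have h1 : σ ^ p = 1 := by rw [← hcard]; exact pow_card_eq_one'
      have : (σ.toLinearMap : Module.End F M) ^ p = 1 := by
        rw [← AlgEquiv.pow_toLinearMap, h1]; rfl
      rw [sub_pow_char_of_commute _ (Commute.one_right _), this]; simp
    have hT0 : T ≠ 0 := by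
      intro h0
      have : σ = 1 := by
        ext x
        have := hT x
        rw [h0] at this
        simpa using (sub_eq_zero.1 this.symm)
      have h2 := orderOf_eq_card_of_forall_mem_zpowers hσ
      rw [this, hcard, orderOf_one] at h2
      exact hp.ne_one h2.symm
    obtain ⟨x, hx1, hx2⟩ : ∃ x, T x ≠ 0 ∧ T (T x) = 0 := by
      by_contra! hcon
      have key : ∀ n, ∀ x, T x ≠ 0 → (T ^ n) (T x) ≠ 0 := by
        intro n
        induction n with
        | zero => intro x hx; simpa using hx
        | succ n ih =>
          intro x hx
          rw [pow_succ, Module.End.mul_apply]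
          exact ih _ (hcon x hx)
      obtain ⟨x, hx⟩ : ∃ x, T x ≠ 0 := by
        by_contra! h'
        exact hT0 (LinearMap.ext h')
      exact key p x hx (by rw [hTp]; rfl)
    obtain ⟨y, hy⟩ := hfix (T x) (by rw [hT] at hx2; exact sub_eq_zero.1 hx2)
    refine ⟨x / T x, ?_⟩
    have h3 : σ (T x) = T x := by rw [← hy]; simp
    rw [map_div₀, h3]
    field_simp
    rw [hT]; ring
  obtain ⟨a, ha⟩ := hfix (b ^ p - b) (by
    rw [map_sub, map_pow, hb, add_pow_char]; ring)
  obtain ⟨y, hy⟩ := Algebra.trace_surjective F M a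
  obtain ⟨c, hc⟩ := h y
  set d := algebraMap F M (Algebra.trace F M c) with hd
  have hdd : d ^ p - d = b ^ p - b := by
    rw [← ha, ← hy, ← hc, map_sub, map_sub, hd]
    congr 1
    rw [trace_eq_sum_automorphisms, trace_eq_sum_automorphisms, sum_pow_char]
    simp
  have he : b - d ∈ (⊥ : Subfield M) := by
    rw [Subfield.mem_bot_iff_pow_eq_self M p, sub_pow_char]
    linear_combination -hdd
  have hs : σ (b - d) = b - d := by
    have : (⊥ : Subfield M) ≤ (σ : M →+* M).eqLocusField (RingHom.id M) := bot_le
    exact this he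
  rw [map_sub, hb, hd, AlgEquiv.commutes] at hs
  have : (1 : M) = 0 := by linear_combination hs
  exact one_ne_zero this

lemma no_prime {K Ksep : Type*} [Field K] [Field Ksep] [Algebra K Ksep]
    [IsSepClosure K Ksep]
    (h : ∀ L : IntermediateField K Ksep, FiniteDimensional K L → IsGalois K L →
      (∀ q : ℕ, q.Prime → q ≠ ringChar K → ∀ x : L, x ≠ 0 → ∃ y : L, y ^ q = x) ∧
      (∀ p : ℕ, p ≠ 0 → CharP K p → ∀ x : L, ∃ b : L, b ^ p - b = x)) (q : ℕ) :
    q.Prime → ∀ M : IntermediateField K Ksep, FiniteDimensional K M → IsGalois K M →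
      ¬ q ∣ finrank K M := by
  have hsep : IsSepClosed Ksep := IsSepClosure.sep_closed K
  induction q using Nat.strong_induction_on with
  | _ q ih =>
  intro hq M hfd hgal hdvd
  have : Fact q.Prime := ⟨hq⟩
  rw [← IsGalois.card_aut_eq_finrank] at hdvd
  obtain ⟨g, hg⟩ := exists_prime_orderOf_dvd_card' (G := Gal(M/K)) q hdvd
  let F := fixedField (Subgroup.zpowers g)
  have hdeg : finrank F M = q := by
    rw [finrank_fixedField_eq_card, Nat.card_zpowers, hg]
  have hchF : ringChar K = ringChar F :=
    Algebra.ringChar_eq K F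
  by_cases hqc : q = ringChar K
  · have hK : CharP K q := hqc ▸ ringChar.charP K
    have : CharP F q := charP_of_injective_algebraMap (algebraMap K F).injective q
    exact as_step (F := F) (M := M) q hq hdeg ((h M hfd hgal).2 q hq.ne_zero hK)
  · obtain ⟨e, he⟩ := (h ⊥ inferInstance inferInstance).1 q hq hqc (-1) (by simp)
    obtain ⟨e', he'⟩ : ∃ e' : K, e' ^ q = -1 := by
      refine ⟨botEquiv K Ksep e, ?_⟩
      rw [← map_pow, he]; simp
    have hqK : (q : K) ≠ 0 := by
      intro h0
      have h1 := (ringChar.spec K q).1 h0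
      rcases (Nat.dvd_prime hq).1 h1 with h2 | h2
      · exact CharP.ringChar_ne_one h2
      · exact hqc h2.symm
    have : NeZero (q : Ksep) := ⟨by
      rw [← map_natCast (algebraMap K Ksep)]; exact (_root_.map_ne_zero _).2 hqK⟩
    obtain ⟨ζ, hζ⟩ := HasEnoughRootsOfUnity.exists_primitiveRoot Ksep q
    have : Algebra.IsAlgebraic K Ksep := inferInstance
    have := hζ.intermediateField_adjoin_isCyclotomicExtension K
    have hG : IsGalois K K⟮ζ⟯ := IsCyclotomicExtension.isGalois {q} K K⟮ζ⟯
    have hint : IsIntegral K ζ := Algebra.IsIntegral.isIntegral ζ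
    have hf : FiniteDimensional K K⟮ζ⟯ := adjoin.finiteDimensional hint
    have hlt : finrank K K⟮ζ⟯ < q := by
      rw [adjoin.finrank hint]
      have hd : minpoly K ζ ∣ cyclotomic q K := minpoly.dvd _ _ (by
        have := hζ.isRoot_cyclotomic hq.pos
        rw [aeval_def, ← eval_map, map_cyclotomic]
        exact this)
      have := natDegree_le_of_dvd hd (cyclotomic_ne_zero q K)
      rw [natDegree_cyclotomic] at this
      exact this.trans_lt (Nat.totient_lt q hq.one_lt)
    have h1 : finrank K K⟮ζ⟯ = 1 := by
      by_contra hne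
      obtain ⟨l, hl, hld⟩ := Nat.exists_prime_and_dvd hne
      exact ih l ((Nat.le_of_dvd finrank_pos hld).trans_lt hlt) hl _ hf hG hld
    rw [finrank_adjoin_simple_eq_one_iff, mem_bot] at h1
    obtain ⟨z, rfl⟩ := h1
    have hz : IsPrimitiveRoot z q := hζ.of_map_of_injective (algebraMap K Ksep).injective
    exact kummer_step (F := F) (M := M) q hq hdeg (algebraMap K F z)
      (hz.map_of_injective (algebraMap K F).injective) (algebraMap K F e')
      (by rw [← map_pow, he']; simp) ((h M hfd hgal).1 q hq hqc)


/-- Fact 5.3 (Macintyre's Galois-theoretic criterion): if for every finite Galois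
extension `L` of `K` (inside a fixed separable closure `K^sep`) every nonzero
element of `L` is a `q`-th power for every prime `q ≠ char K`, and (when
`char K = p > 0`) every element of `L` is of the form `b^p − b`, then `K` is
separably closed. -/
theorem stmt_10 {K Ksep : Type*} [Field K] [Field Ksep] [Algebra K Ksep]
    [IsSepClosure K Ksep]
    (h : ∀ L : IntermediateField K Ksep, FiniteDimensional K L → IsGalois K L →
      (∀ q : ℕ, q.Prime → q ≠ ringChar K → ∀ x : L, x ≠ 0 → ∃ y : L, y ^ q = x) ∧
      (∀ p : ℕ, p ≠ 0 → CharP K p → ∀ x : L, ∃ b : L, b ^ p - b = x)) :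
    IsSepClosed K := by
  have hsep : IsSepClosed Ksep := IsSepClosure.sep_closed K
  apply IsSepClosed.of_exists_root
  intro f hm hirr hfs
  obtain ⟨x, hx⟩ := IsSepClosed.exists_aeval_eq_zero Ksep f (degree_pos_of_irreducible hirr).ne' hfs
  let L := FiniteGaloisIntermediateField.adjoin K {x}
  have h1 : finrank K L.toIntermediateField = 1 := by
    by_contra hne
    obtain ⟨l, hl, hld⟩ := Nat.exists_prime_and_dvd hne
    exact no_prime h l hl L.toIntermediateField inferInstance inferInstance hld
  rw [IntermediateField.finrank_eq_one_iff] at h1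
  have hxL : x ∈ L.toIntermediateField :=
    FiniteGaloisIntermediateField.subset_adjoin K {x} rfl
  rw [h1, mem_bot] at hxL
  obtain ⟨z, rfl⟩ := hxL
  refine ⟨z, ?_⟩
  rw [aeval_algebraMap_apply] at hx
  simpa using hx
end
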